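/- If the cyclic BCPG stepsize parameters are chosen as P_k = L for every k, then for all r ≥ 0 the iterates satisfy Δ^{(r+1)} := f(x^{(r+1)}) − f* ≤ 3 · max{ Δ^{(0)}, 4 log²(2NK) · L · R_0² } / (r+1). -/

import Mathlib

open Finset

/-- Squared Euclidean norm of a vector in `ℝ^n`. -/
noncomputable def sqnorm {n : ℕ} (v : Fin n → ℝ) : ℝ := ∑ i, v i ^ 2

/-- Euclidean inner product on `ℝ^n`. -/
noncomputable def dotp {n : ℕ} (u v : Fin n → ℝ) : ℝ := ∑ i, u i * v i

/-- `λ_max(AᵀA)` for a real matrix `A`, characterized as the maximum of `‖Av‖²`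
over unit vectors `v`. -/
noncomputable def lamMaxQ {M N : ℕ} (A : Matrix (Fin M) (Fin N) ℝ) : ℝ :=
  sSup {r : ℝ | ∃ v : Fin N → ℝ, sqnorm v = 1 ∧ r = sqnorm (A.mulVec v)}

/-- `λ_min(AᵀA)` for a real matrix `A`, characterized as the minimum of `‖Av‖²`
over unit vectors `v`. -/
noncomputable def lamMinQ {M N : ℕ} (A : Matrix (Fin M) (Fin N) ℝ) : ℝ :=
  sInf {r : ℝ | ∃ v : Fin N → ℝ, sqnorm v = 1 ∧ r = sqnorm (A.mulVec v)}

/-- `λ_max(AᵀA)` for the concatenated matrix `A = [A_1 ⋯ A_K]`, acting on block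
vectors. -/
noncomputable def lamMaxBlock {K M N : ℕ} (A : Fin K → Matrix (Fin M) (Fin N) ℝ) : ℝ :=
  sSup {r : ℝ | ∃ v : Fin K → Fin N → ℝ, (∑ k, sqnorm (v k)) = 1 ∧
    r = sqnorm (∑ k, (A k).mulVec (v k))}

/-- Maximum of a finite family of reals indexed by `Fin K`, `K ≥ 1`. -/
noncomputable def maxOf {K : ℕ} (hK : 1 ≤ K) (P : Fin K → ℝ) : ℝ :=
  Finset.univ.sup' (Finset.univ_nonempty_iff.mpr ⟨⟨0, hK⟩⟩) P

/-- Minimum of a finite family of reals indexed by `Fin K`, `K ≥ 1`. -/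
noncomputable def minOf {K : ℕ} (hK : 1 ≤ K) (P : Fin K → ℝ) : ℝ :=
  Finset.univ.inf' (Finset.univ_nonempty_iff.mpr ⟨⟨0, hK⟩⟩) P

/-- The residual `Σ_k A_k x_k − b`. -/
noncomputable def resid {K M N : ℕ} (A : Fin K → Matrix (Fin M) (Fin N) ℝ)
    (b : Fin M → ℝ) (x : Fin K → Fin N → ℝ) : Fin M → ℝ :=
  (∑ k, (A k).mulVec (x k)) - b

/-- The smooth part `g(x) = (1/2)‖Σ_k A_k x_k − b‖²`. -/
noncomputable def gq {K M N : ℕ} (A : Fin K → Matrix (Fin M) (Fin N) ℝ)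
    (b : Fin M → ℝ) (x : Fin K → Fin N → ℝ) : ℝ :=
  (1 / 2) * sqnorm (resid A b x)

/-- The objective `f(x) = g(x) + Σ_k h_k(x_k)`. -/
noncomputable def fq {K M N : ℕ} (A : Fin K → Matrix (Fin M) (Fin N) ℝ)
    (b : Fin M → ℝ) (h : Fin K → (Fin N → ℝ) → ℝ) (x : Fin K → Fin N → ℝ) : ℝ :=
  gq A b x + ∑ k, h k (x k)

/-- The partial gradient `∇_k g(x) = A_kᵀ (Σ_j A_j x_j − b)`. -/
noncomputable def gradk {K M N : ℕ} (A : Fin K → Matrix (Fin M) (Fin N) ℝ)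
    (b : Fin M → ℝ) (x : Fin K → Fin N → ℝ) (k : Fin K) : Fin N → ℝ :=
  ((A k).transpose).mulVec (resid A b x)

/-- The intermediate point `w_k^{(r+1)}` of the cycle: blocks `j < k` come from
`x^{(r+1)} = xp`, the remaining blocks from `x^{(r)} = x`. -/
def wpt {K N : ℕ} (x xp : Fin K → Fin N → ℝ) (k : Fin K) : Fin K → Fin N → ℝ :=
  fun j => if j < k then xp j else x j

/-- The objective of the `k`-th BCPG prox subproblem at the point
`w_k^{(r+1)} = wpt x xp k`, evaluated at candidate block `y`. -/
noncomputable def bcpgObj {K M N : ℕ} (A : Fin K → Matrix (Fin M) (Fin N) ℝ)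
    (b : Fin M → ℝ) (h : Fin K → (Fin N → ℝ) → ℝ) (P : Fin K → ℝ)
    (x xp : Fin K → Fin N → ℝ) (k : Fin K) (y : Fin N → ℝ) : ℝ :=
  dotp (gradk A b (wpt x xp k) k) (y - x k) + (P k / 2) * sqnorm (y - x k) + h k y

/-- One cycle of cyclic BCPG: `xp = x^{(r+1)}` is obtained from `x = x^{(r)}`
by letting, for `k = 1,…,K`, the `k`-th block minimize the prox subproblem at
`w_k^{(r+1)}` over `X_k`. -/
def BCPGStep {K M N : ℕ} (A : Fin K → Matrix (Fin M) (Fin N) ℝ)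
    (b : Fin M → ℝ) (h : Fin K → (Fin N → ℝ) → ℝ)
    (X : Fin K → Set (Fin N → ℝ)) (P : Fin K → ℝ)
    (x xp : Fin K → Fin N → ℝ) : Prop :=
  ∀ k : Fin K, xp k ∈ X k ∧ ∀ y ∈ X k,
    bcpgObj A b h P x xp k (xp k) ≤ bcpgObj A b h P x xp k y

/-- One cycle of cyclic exact BCD: `xp = x^{(r+1)}` is obtained from
`x = x^{(r)}` by letting, for `k = 1,…,K`, the `k`-th block minimize
`f(x_1^{(r+1)},…,x_{k−1}^{(r+1)}, ·, x_{k+1}^{(r)},…,x_K^{(r)})` over `X_k`. -/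
def BCDStep {K M N : ℕ} (A : Fin K → Matrix (Fin M) (Fin N) ℝ)
    (b : Fin M → ℝ) (h : Fin K → (Fin N → ℝ) → ℝ)
    (X : Fin K → Set (Fin N → ℝ))
    (x xp : Fin K → Fin N → ℝ) : Prop :=
  ∀ k : Fin K, xp k ∈ X k ∧ ∀ y ∈ X k,
    fq A b h (Function.update (wpt x xp k) k (xp k)) ≤
      fq A b h (Function.update (wpt x xp k) k y)


lemma dotp_eq {n : ℕ} (u v : Fin n → ℝ) : dotp u v = u ⬝ᵥ v := rfl

lemma sqnorm_eq {n : ℕ} (v : Fin n → ℝ) : sqnorm v = v ⬝ᵥ v := by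
  simp [sqnorm, dotProduct, pow_two]

lemma sqnorm_nonneg' {n : ℕ} (v : Fin n → ℝ) : 0 ≤ sqnorm v :=
  Finset.sum_nonneg fun _ _ => sq_nonneg _

lemma sqnorm_smul {n : ℕ} (c : ℝ) (v : Fin n → ℝ) : sqnorm (c • v) = c ^ 2 * sqnorm v := by
  simp [sqnorm, Finset.mul_sum, mul_pow]

lemma lam_nonneg {K M N : ℕ} (A : Fin K → Matrix (Fin M) (Fin N) ℝ) : 0 ≤ lamMaxBlock A := by
  apply Real.sSup_nonneg
  rintro r ⟨v, _, rfl⟩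
  exact sqnorm_nonneg' _

lemma crude {K M N : ℕ} (A : Fin K → Matrix (Fin M) (Fin N) ℝ) (v : Fin K → Fin N → ℝ) :
    sqnorm (∑ k, (A k).mulVec (v k)) ≤
      (∑ i, ∑ p : Fin K × Fin N, A p.1 i p.2 ^ 2) * ∑ k, sqnorm (v k) := by
  have h1 : ∑ k, sqnorm (v k) = ∑ p : Fin K × Fin N, v p.1 p.2 ^ 2 := by
    rw [Fintype.sum_prod_type]; rfl
  rw [h1, Finset.sum_mul]
  unfold sqnorm
  apply Finset.sum_le_sum
  intro i _
  have h2 : (∑ k, (A k).mulVec (v k)) i = ∑ p : Fin K × Fin N, A p.1 i p.2 * v p.1 p.2 := by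
    rw [Fintype.sum_prod_type, Finset.sum_apply]; rfl
  rw [h2]
  exact Finset.sum_mul_sq_le_sq_mul_sq _ _ _

lemma lam_bound {K M N : ℕ} (A : Fin K → Matrix (Fin M) (Fin N) ℝ) (v : Fin K → Fin N → ℝ) :
    sqnorm (∑ k, (A k).mulVec (v k)) ≤ lamMaxBlock A * ∑ k, sqnorm (v k) := by
  set S := ∑ k, sqnorm (v k) with hS
  have hS0 : 0 ≤ S := Finset.sum_nonneg fun _ _ => sqnorm_nonneg' _
  rcases hS0.eq_or_lt with h0 | h0
  · have := crude A v
    rw [← hS, ← h0] at this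
    rw [← h0]; simpa using this
  · have hbd : BddAbove {r : ℝ | ∃ v : Fin K → Fin N → ℝ, (∑ k, sqnorm (v k)) = 1 ∧
        r = sqnorm (∑ k, (A k).mulVec (v k))} := by
      refine ⟨(∑ i, ∑ p : Fin K × Fin N, A p.1 i p.2 ^ 2), ?_⟩
      rintro r ⟨w, hw, rfl⟩
      have := crude A w
      rwa [hw, mul_one] at this
    set c := (Real.sqrt S)⁻¹ with hc
    have hc2 : c ^ 2 = S⁻¹ := by rw [hc, inv_pow, Real.sq_sqrt hS0]
    have h1 : sqnorm (∑ k, (A k).mulVec (c • v k)) ≤ lamMaxBlock A := by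
      apply le_csSup hbd
      refine ⟨fun k => c • v k, ?_, rfl⟩
      simp only [sqnorm_smul, ← Finset.mul_sum, hc2]
      exact inv_mul_cancel₀ h0.ne'
    simp only [Matrix.mulVec_smul, ← Finset.smul_sum, sqnorm_smul, hc2] at h1
    rw [inv_mul_eq_div, div_le_iff₀ h0] at h1
    exact h1

lemma sum_ite_fn {K n : ℕ} (s : Finset (Fin K)) (F : Fin K → Fin n → ℝ) :
    (∑ k, if k ∈ s then F k else 0) = ∑ k ∈ s, F k := by
  simp

lemma lam_bound_sub {K M N : ℕ} (A : Fin K → Matrix (Fin M) (Fin N) ℝ)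
    (u v : Fin K → Fin N → ℝ) (s t : Finset (Fin K)) (hst : Disjoint s t) :
    (∑ k ∈ s, (A k).mulVec (u k)) ⬝ᵥ (∑ k ∈ t, (A k).mulVec (v k)) ≤
      lamMaxBlock A / 4 * (∑ k ∈ s, sqnorm (u k) + ∑ k ∈ t, sqnorm (v k)) := by
  have h := lam_bound A (fun k => if k ∈ s then u k else if k ∈ t then v k else 0)
  have key : ∀ {β : Type} [AddCommMonoid β] (F G : Fin K → β),
      (∑ k, if k ∈ s then F k else if k ∈ t then G k else 0) = ∑ k ∈ s, F k + ∑ k ∈ t, G k := by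
    intro β _ F G
    have e : ∀ k, (if k ∈ s then F k else if k ∈ t then G k else 0) =
        (if k ∈ s then F k else 0) + (if k ∈ t then G k else 0) := by
      intro k
      by_cases hk : k ∈ s
      · have : k ∉ t := Finset.disjoint_left.mp hst hk
        simp [hk, this]
      · simp [hk]
    simp only [e, Finset.sum_add_distrib]
    simp
  have e1 : ∀ k, (A k).mulVec (if k ∈ s then u k else if k ∈ t then v k else 0) =
      if k ∈ s then (A k).mulVec (u k) else if k ∈ t then (A k).mulVec (v k) else 0 := by
    intro k; split_ifs <;> simp
  have e2 : ∀ k, sqnorm (if k ∈ s then u k else if k ∈ t then v k else 0) =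
      if k ∈ s then sqnorm (u k) else if k ∈ t then sqnorm (v k) else 0 := by
    intro k; split_ifs <;> simp [sqnorm]
  simp only [e1, e2, key] at h
  have h' := sqnorm_nonneg' (∑ k ∈ s, (A k).mulVec (u k) - ∑ k ∈ t, (A k).mulVec (v k))
  generalize (∑ k ∈ s, (A k).mulVec (u k)) = a at *
  generalize (∑ k ∈ t, (A k).mulVec (v k)) = b at *
  simp only [sqnorm_eq (a + b), sqnorm_eq (a - b),
    dotProduct_add, add_dotProduct, dotProduct_sub, sub_dotProduct] at h h'
  rw [dotProduct_comm b a] at h h'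
  linarith

lemma dyadic {K : ℕ} (W : Fin K → Fin K → ℝ) (p q : Fin K → ℝ) (C : ℝ)
    (hW : ∀ s t : Finset (Fin K), Disjoint s t →
      ∑ k ∈ s, ∑ j ∈ t, W k j ≤ C * (∑ k ∈ s, p k + ∑ k ∈ t, q k))
    (hC : 0 ≤ C) (hp : ∀ k, 0 ≤ p k) (hq : ∀ k, 0 ≤ q k) (m : ℕ) : ∀ a : ℕ,
    ∑ k ∈ univ.filter (fun k : Fin K => a ≤ k.val ∧ k.val < a + 2 ^ m),
      ∑ j ∈ univ.filter (fun k : Fin K => a ≤ k.val ∧ k.val < a + 2 ^ m),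
        (if k < j then W k j else 0) ≤
      m * C * (∑ k ∈ univ.filter (fun k : Fin K => a ≤ k.val ∧ k.val < a + 2 ^ m), p k +
        ∑ k ∈ univ.filter (fun k : Fin K => a ≤ k.val ∧ k.val < a + 2 ^ m), q k) := by
  induction m with
  | zero =>
    intro a
    simp only [pow_zero, Nat.cast_zero, zero_mul]
    apply le_of_eq
    apply Finset.sum_eq_zero
    intro k hk
    apply Finset.sum_eq_zero
    intro j hj
    simp only [Finset.mem_filter, Finset.mem_univ, true_and] at hk hj
    rw [if_neg]
    rw [Fin.lt_def]; omega
  | succ m ih =>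
    intro a
    set I1 := univ.filter (fun k : Fin K => a ≤ k.val ∧ k.val < a + 2 ^ m) with hI1
    set I2 := univ.filter (fun k : Fin K => a + 2 ^ m ≤ k.val ∧ k.val < a + 2 ^ m + 2 ^ m) with hI2
    have hdis : Disjoint I1 I2 := by
      rw [Finset.disjoint_left]
      intro k hk hk'
      simp only [hI1, hI2, Finset.mem_filter, Finset.mem_univ, true_and] at hk hk'
      omega
    have hU : univ.filter (fun k : Fin K => a ≤ k.val ∧ k.val < a + 2 ^ (m+1)) =
        I1.disjUnion I2 hdis := by
      ext k
      simp only [hI1, hI2, Finset.mem_disjUnion, Finset.mem_filter, Finset.mem_univ, true_and]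
      have : 2 ^ (m+1) = 2 ^ m + 2 ^ m := by ring
      omega
    have h1 := ih a
    have h2 := ih (a + 2 ^ m)
    rw [← hI1] at h1
    rw [← hI2] at h2
    have h3 := hW I1 I2 hdis
    rw [hU]
    simp only [Finset.sum_disjUnion, Finset.sum_add_distrib]
    have h4 : ∑ k ∈ I1, ∑ j ∈ I2, (if k < j then W k j else 0) = ∑ k ∈ I1, ∑ j ∈ I2, W k j := by
      apply Finset.sum_congr rfl
      intro k hk
      apply Finset.sum_congr rfl
      intro j hj
      simp only [hI1, hI2, Finset.mem_filter, Finset.mem_univ, true_and] at hk hj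
      rw [if_pos]
      rw [Fin.lt_def]; omega
    have h5 : ∑ k ∈ I2, ∑ j ∈ I1, (if k < j then W k j else 0) = 0 := by
      apply Finset.sum_eq_zero
      intro k hk
      apply Finset.sum_eq_zero
      intro j hj
      simp only [hI1, hI2, Finset.mem_filter, Finset.mem_univ, true_and] at hk hj
      rw [if_neg]
      rw [Fin.lt_def]; omega
    rw [h4, h5]
    have e1 : 0 ≤ C * ∑ k ∈ I1, q k := mul_nonneg hC (Finset.sum_nonneg fun _ _ => hq _)
    have e2 : 0 ≤ C * ∑ k ∈ I2, p k := mul_nonneg hC (Finset.sum_nonneg fun _ _ => hp _)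
    push_cast
    linarith

lemma vi {n : ℕ} (c x0 z : Fin n → ℝ) (P : ℝ) (hf : (Fin n → ℝ) → ℝ) (X : Set (Fin n → ℝ))
    (hX : Convex ℝ X) (hcv : ConvexOn ℝ Set.univ hf) (hz : z ∈ X)
    (hmin : ∀ y ∈ X, c ⬝ᵥ (z - x0) + P / 2 * sqnorm (z - x0) + hf z ≤
      c ⬝ᵥ (y - x0) + P / 2 * sqnorm (y - x0) + hf y) (y : Fin n → ℝ) (hy : y ∈ X) :
    c ⬝ᵥ (z - y) + P * ((z - x0) ⬝ᵥ (z - y)) + hf z - hf y ≤ 0 := by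
  have hs : ∀ s : ℝ, 0 < s → s ≤ 1 →
      c ⬝ᵥ (z - y) + P * ((z - x0) ⬝ᵥ (z - y)) + hf z - hf y ≤ s * (P / 2 * sqnorm (z - y)) := by
    intro s hs0 hs1
    have hm := hmin ((1 - s) • z + s • y) (hX hz hy (by linarith) hs0.le (by ring))
    have hc := hcv.2 (Set.mem_univ z) (Set.mem_univ y) (by linarith : 0 ≤ 1 - s) hs0.le (by ring)
    have e : (1 - s) • z + s • y - x0 = (z - x0) - s • (z - y) := by
      ext i; simp; ring
    rw [e] at hm
    simp only [sqnorm_eq, dotProduct_sub, sub_dotProduct, smul_dotProduct, dotProduct_smul,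
      smul_eq_mul] at hm hc ⊢
    rw [dotProduct_comm x0 z, dotProduct_comm y z, dotProduct_comm y x0] at hm
    rw [dotProduct_comm x0 z, dotProduct_comm y z]
    refine le_of_mul_le_mul_left ?_ hs0
    linarith
  by_contra hcon
  push Not at hcon
  set G := c ⬝ᵥ (z - y) + P * ((z - x0) ⬝ᵥ (z - y)) + hf z - hf y
  set H := P / 2 * sqnorm (z - y)
  have h1 := hs 1 one_pos le_rfl
  have hH : 0 < H := by linarith
  have h2 := hs (G / (2 * H)) (by positivity) (by rw [div_le_one (by positivity)]; linarith)
  have : G / (2 * H) * H = G / 2 := by field_simp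
  linarith

lemma lam_block {K M N : ℕ} (A : Fin K → Matrix (Fin M) (Fin N) ℝ) (k : Fin K)
    (z : Fin N → ℝ) : sqnorm ((A k).mulVec z) ≤ lamMaxBlock A * sqnorm z := by
  have h := lam_bound A (fun j => if j = k then z else 0)
  have e1 : ∀ j, (A j).mulVec (if j = k then z else 0) = if j = k then (A j).mulVec z else 0 := by
    intro j; split_ifs <;> simp
  have e2 : ∀ j, sqnorm (if j = k then z else 0) = if j = k then sqnorm z else 0 := by
    intro j; split_ifs <;> simp [sqnorm]
  simpa [e1, e2] using h

lemma tri {K M N : ℕ} (A : Fin K → Matrix (Fin M) (Fin N) ℝ)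
    (u v : Fin K → Fin N → ℝ) (m : ℕ) (hm : K ≤ 2 ^ m) :
    ∑ k, ((∑ j, if k ≤ j then (A k).mulVec (u k) ⬝ᵥ (A j).mulVec (v j) else 0)
        - lamMaxBlock A * (u k ⬝ᵥ v k)) ≤
      ((m : ℝ) / 2 + 1) / 2 * lamMaxBlock A * (∑ k, sqnorm (u k) + ∑ k, sqnorm (v k)) := by
  have hd := dyadic (fun k j => (A k).mulVec (u k) ⬝ᵥ (A j).mulVec (v j))
    (fun k => sqnorm (u k)) (fun k => sqnorm (v k)) (lamMaxBlock A / 4) (by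
      intro s t hst
      have := lam_bound_sub A u v s t hst
      simp only [sum_dotProduct, dotProduct_sum] at this
      rwa [Finset.sum_comm] at this)
    (by have := lam_nonneg A; linarith) (fun _ => sqnorm_nonneg' _) (fun _ => sqnorm_nonneg' _) m 0
  have huniv : univ.filter (fun k : Fin K => 0 ≤ k.val ∧ k.val < 0 + 2 ^ m) = univ := by
    ext k; simp; omega
  rw [huniv] at hd
  have hdiag : ∀ k, (A k).mulVec (u k) ⬝ᵥ (A k).mulVec (v k) - lamMaxBlock A * (u k ⬝ᵥ v k) ≤
      lamMaxBlock A / 2 * (sqnorm (u k) + sqnorm (v k)) := by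
    intro k
    have h1 := lam_block A k (u k + v k)
    have h2 := sqnorm_nonneg' ((A k).mulVec (u k))
    have h3 := sqnorm_nonneg' ((A k).mulVec (v k))
    have h1 := lam_block A k (u k - v k)
    have h4 := mul_nonneg (lam_nonneg A) (sqnorm_nonneg' (u k + v k))
    have h5 := sqnorm_nonneg' ((A k).mulVec (u k - v k))
    have h6 := lam_block A k (u k + v k)
    simp only [Matrix.mulVec_sub, Matrix.mulVec_add, sqnorm_eq, dotProduct_add, add_dotProduct,
      dotProduct_sub, sub_dotProduct] at *
    rw [dotProduct_comm (v k) (u k), dotProduct_comm ((A k).mulVec (v k))] at *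
    linarith
  have hsplit : ∀ k, (∑ j, if k ≤ j then (A k).mulVec (u k) ⬝ᵥ (A j).mulVec (v j) else 0) =
      (∑ j, if k < j then (A k).mulVec (u k) ⬝ᵥ (A j).mulVec (v j) else 0) +
        (A k).mulVec (u k) ⬝ᵥ (A k).mulVec (v k) := by
    intro k
    have : (A k).mulVec (u k) ⬝ᵥ (A k).mulVec (v k) =
        ∑ j, if k = j then (A k).mulVec (u k) ⬝ᵥ (A j).mulVec (v j) else 0 := by simp
    rw [this, ← Finset.sum_add_distrib]
    apply Finset.sum_congr rfl
    intro j _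
    rcases lt_trichotomy k j with hkj | hkj | hkj
    · simp [hkj, hkj.le, hkj.ne]
    · simp [hkj]
    · simp [hkj.not_ge, hkj.not_gt, hkj.ne']
  have hsum := Finset.sum_le_sum (fun k (_ : k ∈ univ) => hdiag k)
  simp only [hsplit]
  rw [← Finset.mul_sum, Finset.sum_add_distrib] at hsum
  have : ∀ k, (∑ j, if k < j then (A k).mulVec (u k) ⬝ᵥ (A j).mulVec (v j) else 0) +
        (A k).mulVec (u k) ⬝ᵥ (A k).mulVec (v k) - lamMaxBlock A * (u k ⬝ᵥ v k) =
      (∑ j, if k < j then (A k).mulVec (u k) ⬝ᵥ (A j).mulVec (v j) else 0) +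
        ((A k).mulVec (u k) ⬝ᵥ (A k).mulVec (v k) - lamMaxBlock A * (u k ⬝ᵥ v k)) := by
    intro k; ring
  simp only [this]
  rw [Finset.sum_add_distrib]
  calc _ ≤ _ := add_le_add hd hsum
    _ = _ := by ring

lemma resid_wpt_hi {K M N : ℕ} (A : Fin K → Matrix (Fin M) (Fin N) ℝ) (b : Fin M → ℝ)
    (x xp : Fin K → Fin N → ℝ) (k : Fin K) :
    resid A b xp - resid A b (wpt x xp k) =
      ∑ j, if k ≤ j then (A j).mulVec (xp j - x j) else 0 := by
  unfold resid wpt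
  rw [sub_sub_sub_cancel_right, ← Finset.sum_sub_distrib]
  apply Finset.sum_congr rfl
  intro j _
  by_cases hj : j < k
  · simp [hj, hj.not_ge]
  · simp [hj, not_lt.mp hj, Matrix.mulVec_sub]

lemma resid_wpt_lo {K M N : ℕ} (A : Fin K → Matrix (Fin M) (Fin N) ℝ) (b : Fin M → ℝ)
    (x xp : Fin K → Fin N → ℝ) (k : Fin K) :
    resid A b (wpt x xp k) - resid A b x =
      ∑ j, if j < k then (A j).mulVec (xp j - x j) else 0 := by
  unfold resid wpt
  rw [sub_sub_sub_cancel_right, ← Finset.sum_sub_distrib]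
  apply Finset.sum_congr rfl
  intro j _
  by_cases hj : j < k
  · simp [hj, Matrix.mulVec_sub]
  · simp [hj]

lemma resid_sub {K M N : ℕ} (A : Fin K → Matrix (Fin M) (Fin N) ℝ) (b : Fin M → ℝ)
    (x xp : Fin K → Fin N → ℝ) :
    resid A b xp - resid A b x = ∑ j, (A j).mulVec (xp j - x j) := by
  unfold resid
  rw [sub_sub_sub_cancel_right, ← Finset.sum_sub_distrib]
  simp [Matrix.mulVec_sub]

lemma gradk_dot {K M N : ℕ} (A : Fin K → Matrix (Fin M) (Fin N) ℝ) (b : Fin M → ℝ)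
    (x : Fin K → Fin N → ℝ) (k : Fin K) (z : Fin N → ℝ) :
    gradk A b x k ⬝ᵥ z = resid A b x ⬝ᵥ (A k).mulVec z := by
  unfold gradk
  rw [Matrix.mulVec_transpose, Matrix.dotProduct_mulVec]

lemma step_vi {K M N : ℕ} (A : Fin K → Matrix (Fin M) (Fin N) ℝ) (b : Fin M → ℝ)
    (X : Fin K → Set (Fin N → ℝ)) (h : Fin K → (Fin N → ℝ) → ℝ)
    (hXcv : ∀ k, Convex ℝ (X k)) (hhcv : ∀ k, ConvexOn ℝ Set.univ (h k))
    (P : Fin K → ℝ) (x xp : Fin K → Fin N → ℝ) (hs : BCPGStep A b h X P x xp)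
    (k : Fin K) (y : Fin N → ℝ) (hy : y ∈ X k) :
    resid A b (wpt x xp k) ⬝ᵥ (A k).mulVec (xp k - y) +
      P k * ((xp k - x k) ⬝ᵥ (xp k - y)) + h k (xp k) - h k y ≤ 0 := by
  rw [← gradk_dot]
  exact vi _ _ _ _ _ (X k) (hXcv k) (hhcv k) (hs k).1 (hs k).2 y hy

lemma sym_sum {K : ℕ} (W : Fin K → Fin K → ℝ) (hW : ∀ k j, W k j = W j k) :
    ∑ k, ∑ j, W k j = 2 * ∑ k, ∑ j, (if j < k then W j k else 0) + ∑ k, W k k := by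
  have e : ∀ k j, W k j = (if j < k then W j k else 0) + (if k < j then W k j else 0) +
      (if k = j then W k j else 0) := by
    intro k j
    rcases lt_trichotomy k j with hkj | hkj | hkj
    · simp [hkj, hkj.not_gt, hkj.ne]
    · simp [hkj]
    · simp [hkj, hkj.not_gt, hkj.ne', hW k j]
  have h1 : ∑ k, ∑ j, (if k < j then W k j else 0) = ∑ k, ∑ j, (if j < k then W j k else 0) :=
    Finset.sum_comm
  calc ∑ k, ∑ j, W k j = ∑ k, ∑ j, ((if j < k then W j k else 0) + (if k < j then W k j else 0) +
      (if k = j then W k j else 0)) :=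
        Finset.sum_congr rfl fun k _ => Finset.sum_congr rfl fun j _ => e k j
    _ = _ := by
      simp only [Finset.sum_add_distrib, h1]
      simp; ring

lemma descent {K M N : ℕ} (A : Fin K → Matrix (Fin M) (Fin N) ℝ) (b : Fin M → ℝ)
    (X : Fin K → Set (Fin N → ℝ)) (h : Fin K → (Fin N → ℝ) → ℝ)
    (hXcv : ∀ k, Convex ℝ (X k)) (hhcv : ∀ k, ConvexOn ℝ Set.univ (h k))
    (P : Fin K → ℝ) (hP : ∀ k, P k = lamMaxBlock A)
    (x xp : Fin K → Fin N → ℝ) (hx : ∀ k, x k ∈ X k) (hs : BCPGStep A b h X P x xp) :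
    fq A b h xp + lamMaxBlock A / 2 * ∑ k, sqnorm (xp k - x k) ≤ fq A b h x := by
  have hv := fun k => step_vi A b X h hXcv hhcv P x xp hs k (x k) (hx k)
  set a : Fin K → Fin M → ℝ := fun k => (A k).mulVec (xp k - x k) with ha
  have hk : ∀ k, resid A b x ⬝ᵥ a k + (∑ j, if j < k then a j ⬝ᵥ a k else 0) +
      1 / 2 * (a k ⬝ᵥ a k) + lamMaxBlock A / 2 * sqnorm (xp k - x k) + h k (xp k) - h k (x k) ≤ 0 := by
    intro k
    have h1 := hv k
    have h2 := lam_block A k (xp k - x k)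
    have h3 : resid A b (wpt x xp k) = resid A b x + ∑ j, if j < k then a j else 0 := by
      rw [← resid_wpt_lo]; abel
    have h4 : (∑ j, if j < k then a j else 0) ⬝ᵥ a k = ∑ j, if j < k then a j ⬝ᵥ a k else 0 := by
      rw [sum_dotProduct]
      apply Finset.sum_congr rfl
      intro j _
      split_ifs <;> simp
    rw [h3, add_dotProduct, h4, hP, ← sqnorm_eq] at h1
    rw [← sqnorm_eq]
    linarith
  have hsum := Finset.sum_nonpos (fun k (_ : k ∈ univ) => hk k)
  simp only [Finset.sum_add_distrib, Finset.sum_sub_distrib, ← Finset.mul_sum] at hsum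
  have hg : gq A b xp = gq A b x + ∑ k, resid A b x ⬝ᵥ a k + 1 / 2 * ∑ k, ∑ j, a k ⬝ᵥ a j := by
    have h3 : resid A b xp = resid A b x + ∑ j, a j := by
      rw [← resid_sub]; abel
    unfold gq
    rw [h3]
    simp only [sqnorm_eq, add_dotProduct, dotProduct_add]
    rw [dotProduct_comm (∑ j, a j) (resid A b x), dotProduct_sum _ _ a]
    have : (∑ j, a j) ⬝ᵥ (∑ j, a j) = ∑ k, ∑ j, a k ⬝ᵥ a j := by
      rw [sum_dotProduct]; simp only [dotProduct_sum]
    rw [this]; ring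
  rw [sym_sum (fun k j => a k ⬝ᵥ a j) (fun k j => dotProduct_comm _ _)] at hg
  unfold fq
  linarith

lemma costgo {K M N : ℕ} (A : Fin K → Matrix (Fin M) (Fin N) ℝ) (b : Fin M → ℝ)
    (X : Fin K → Set (Fin N → ℝ)) (h : Fin K → (Fin N → ℝ) → ℝ)
    (hXcv : ∀ k, Convex ℝ (X k)) (hhcv : ∀ k, ConvexOn ℝ Set.univ (h k))
    (P : Fin K → ℝ) (hP : ∀ k, P k = lamMaxBlock A)
    (x xp y : Fin K → Fin N → ℝ) (hy : ∀ k, y k ∈ X k) (hs : BCPGStep A b h X P x xp) :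
    fq A b h xp - fq A b h y ≤
    ∑ k, ((∑ j, if k ≤ j then (A k).mulVec (xp k - y k) ⬝ᵥ (A j).mulVec (xp j - x j) else 0)
        - lamMaxBlock A * ((xp k - y k) ⬝ᵥ (xp k - x k))) := by
  have hk : ∀ k, resid A b xp ⬝ᵥ (A k).mulVec (xp k - y k) + h k (xp k) - h k (y k) ≤
      ((∑ j, if k ≤ j then (A k).mulVec (xp k - y k) ⬝ᵥ (A j).mulVec (xp j - x j) else 0)
        - lamMaxBlock A * ((xp k - y k) ⬝ᵥ (xp k - x k))) := by
    intro k
    have h1 := step_vi A b X h hXcv hhcv P x xp hs k (y k) (hy k)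
    have h3 : resid A b xp = resid A b (wpt x xp k) +
        ∑ j, if k ≤ j then (A j).mulVec (xp j - x j) else 0 := by
      rw [← resid_wpt_hi]; abel
    have h4 : (∑ j, if k ≤ j then (A j).mulVec (xp j - x j) else 0) ⬝ᵥ (A k).mulVec (xp k - y k) =
        ∑ j, if k ≤ j then (A k).mulVec (xp k - y k) ⬝ᵥ (A j).mulVec (xp j - x j) else 0 := by
      rw [sum_dotProduct]
      apply Finset.sum_congr rfl
      intro j _
      split_ifs
      · exact dotProduct_comm _ _
      · simp
    rw [h3, add_dotProduct, h4, dotProduct_comm (xp k - y k) (xp k - x k)]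
    rw [hP] at h1
    linarith
  refine le_trans ?_ (Finset.sum_le_sum fun k _ => hk k)
  simp only [Finset.sum_add_distrib, Finset.sum_sub_distrib, ← dotProduct_sum]
  rw [← resid_sub A b y xp]
  have := sqnorm_nonneg' (resid A b xp - resid A b y)
  unfold fq gq
  simp only [sqnorm_eq, dotProduct_sub, sub_dotProduct] at *
  rw [dotProduct_comm (resid A b y) (resid A b xp)] at this
  linarith

lemma recur {K M N : ℕ} (A : Fin K → Matrix (Fin M) (Fin N) ℝ) (b : Fin M → ℝ)
    (X : Fin K → Set (Fin N → ℝ)) (h : Fin K → (Fin N → ℝ) → ℝ)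
    (hXcv : ∀ k, Convex ℝ (X k)) (hhcv : ∀ k, ConvexOn ℝ Set.univ (h k))
    (P : Fin K → ℝ) (hP : ∀ k, P k = lamMaxBlock A)
    (x xp y : Fin K → Fin N → ℝ) (hx : ∀ k, x k ∈ X k) (hy : ∀ k, y k ∈ X k)
    (hs : BCPGStep A b h X P x xp) (hopt : fq A b h y ≤ fq A b h xp) (R : ℝ)
    (hR : ∑ k, sqnorm (xp k - y k) ≤ R ^ 2) (m : ℕ) (hm : K ≤ 2 ^ m) :
    (fq A b h xp - fq A b h y) ^ 2 ≤
      2 * ((m : ℝ) / 2 + 1) ^ 2 * lamMaxBlock A * R ^ 2 * (fq A b h x - fq A b h xp) := by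
  have h1 := costgo A b X h hXcv hhcv P hP x xp y hy hs
  have h2 := descent A b X h hXcv hhcv P hP x xp hx hs
  have h3 := fun t : ℝ => tri A (fun k => xp k - y k) (fun k => t • (xp k - x k)) m hm
  have hL := lam_nonneg A
  set L := lamMaxBlock A
  set D := ∑ k, sqnorm (xp k - x k)
  set E := ∑ k, sqnorm (xp k - y k)
  set S := ∑ k, ((∑ j, if k ≤ j then (A k).mulVec (xp k - y k) ⬝ᵥ (A j).mulVec (xp j - x j) else 0)
        - L * ((xp k - y k) ⬝ᵥ (xp k - x k))) with hS
  set c := (m : ℝ) / 2 + 1 with hc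
  have hD0 : 0 ≤ D := Finset.sum_nonneg fun _ _ => sqnorm_nonneg' _
  have hE0 : 0 ≤ E := Finset.sum_nonneg fun _ _ => sqnorm_nonneg' _
  have h4 : ∀ t : ℝ, 0 ≤ (c / 2 * L * D) * (t * t) + (-S) * t + c / 2 * L * E := by
    intro t
    have h5 := h3 t
    have e1 : ∑ k, sqnorm (t • (xp k - x k)) = t ^ 2 * D := by
      simp only [sqnorm_smul, ← Finset.mul_sum]; rfl
    have e2 : ∑ k, ((∑ j, if k ≤ j then (A k).mulVec (xp k - y k) ⬝ᵥ
          (A j).mulVec (t • (xp j - x j)) else 0)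
        - L * ((xp k - y k) ⬝ᵥ (t • (xp k - x k)))) = t * S := by
      rw [hS, Finset.mul_sum]
      apply Finset.sum_congr rfl
      intro k _
      rw [mul_sub, Finset.mul_sum]
      simp only [Matrix.mulVec_smul, dotProduct_smul, smul_eq_mul, mul_ite, mul_zero]
      ring
    rw [e1, e2] at h5
    linarith
  have h6 := discrim_le_zero h4
  unfold discrim at h6
  have h7 : (fq A b h xp - fq A b h y) ^ 2 ≤ S ^ 2 :=
    pow_le_pow_left₀ (by linarith) h1 2
  have h8 : S ^ 2 ≤ c ^ 2 * L * E * (L * D) := by linarith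
  have h9 : c ^ 2 * L * E * (L * D) ≤ c ^ 2 * L * R ^ 2 * (2 * (fq A b h x - fq A b h xp)) := by
    apply mul_le_mul
    · gcongr
    · linarith
    · positivity
    · positivity
  linarith

lemma const_bound (n K : ℕ) (hn : 3 ≤ n) (hK : 1 ≤ K) (hKn : K ≤ n) :
    (((Nat.log 2 K + 1 : ℕ) : ℝ) / 2 + 1) ^ 2 ≤ 3 * Real.log (2 * (n : ℝ)) ^ 2 := by
  have hn' : (3 : ℝ) ≤ n := by exact_mod_cast hn
  have h1 : ((Nat.log 2 K + 1 : ℕ) : ℝ) * Real.log 2 ≤ Real.log (2 * (n : ℝ)) := by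
    rw [← Real.log_pow]
    apply Real.log_le_log (by positivity)
    have : 2 ^ (Nat.log 2 K) ≤ n := (Nat.pow_log_le_self 2 (by omega)).trans hKn
    have : (2 : ℝ) ^ (Nat.log 2 K) ≤ n := by exact_mod_cast this
    rw [pow_succ]; linarith
  have h2 : 1 ≤ Real.log (2 * (n : ℝ)) := by
    rw [Real.le_log_iff_exp_le (by linarith)]
    have := Real.exp_one_lt_d9
    linarith
  have h3 := Real.log_two_gt_d9
  have h4 : (0 : ℝ) ≤ ((Nat.log 2 K + 1 : ℕ) : ℝ) := Nat.cast_nonneg _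
  generalize ((Nat.log 2 K + 1 : ℕ) : ℝ) = m at *
  generalize Real.log (2 * (n : ℝ)) = l at *
  have h5 : m * 0.693 ≤ l := le_trans (mul_le_mul_of_nonneg_left (by linarith) h4) h1
  have h6 : m / 2 + 1 ≤ 1.73 * l := by linarith
  have h7 := pow_le_pow_left₀ (by linarith) h6 2
  nlinarith [sq_nonneg l]

lemma seq_bound (a : ℕ → ℝ) (σ C : ℝ) (hσ : 0 ≤ σ) (ha : ∀ r, 0 ≤ a r)
    (hrec : ∀ r, a (r + 1) ^ 2 ≤ σ * (a r - a (r + 1))) (h0 : a 1 ≤ C) (hC : 2 * σ ≤ C)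
    (r : ℕ) : a (r + 1) ≤ C / (r + 1) := by
  induction r with
  | zero => simpa using h0
  | succ r ih =>
    have h1 := hrec (r + 1)
    have h2 := ha (r + 1 + 1)
    push_cast
    have hr : (0 : ℝ) ≤ r := Nat.cast_nonneg r
    rw [le_div_iff₀ (by positivity)] at ih ⊢
    generalize a (r + 1 + 1) = v at *
    generalize a (r + 1) = u at *
    generalize (r : ℝ) = q at *
    by_contra hcon
    push Not at hcon
    have hv : 0 < v := by
      by_contra hv
      have : v = 0 := by linarith
      rw [this] at hcon
      linarith
    have k1 : (q + 1) * v ^ 2 ≤ σ * (u * (q + 1) - (q + 1) * v) := by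
      have := mul_le_mul_of_nonneg_left h1 (by linarith : 0 ≤ q + 1)
      linarith
    have k2 : σ * (u * (q + 1) - (q + 1) * v) ≤ σ * v :=
      mul_le_mul_of_nonneg_left (by linarith) hσ
    have k3 : (q + 1) * v ≤ σ := by
      refine le_of_mul_le_mul_right ?_ hv
      linarith
    have k4 : 0 ≤ q * v := by positivity
    linarith

/-- Theorem 1, part 1: cyclic BCPG with conservative stepsizes
`P_k = L` satisfies `Δ^{(r+1)} ≤ 3 max{Δ^{(0)}, 4 log²(2NK) L R_0²}/(r+1)`. -/
theorem bcpg_rate_conservative {K M N : ℕ} (hK : 1 ≤ K) (hM : 1 ≤ M) (hN : 1 ≤ N)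
    (hNK : 3 ≤ N * K)
    (A : Fin K → Matrix (Fin M) (Fin N) ℝ) (b : Fin M → ℝ)
    (X : Fin K → Set (Fin N → ℝ)) (h : Fin K → (Fin N → ℝ) → ℝ)
    (hXne : ∀ k, (X k).Nonempty) (hXcl : ∀ k, IsClosed (X k))
    (hXcv : ∀ k, Convex ℝ (X k))
    (hhcv : ∀ k, ConvexOn ℝ Set.univ (h k))
    (hhlsc : ∀ k, LowerSemicontinuous (h k))
    (P : Fin K → ℝ) (hP : ∀ k, P k = lamMaxBlock A)
    (x : ℕ → Fin K → Fin N → ℝ) (hx0 : ∀ k, x 0 k ∈ X k)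
    (hstep : ∀ r : ℕ, BCPGStep A b h X P (x r) (x (r + 1)))
    (xstar : Fin K → Fin N → ℝ) (hxstarX : ∀ k, xstar k ∈ X k)
    (hxstar : ∀ y : Fin K → Fin N → ℝ, (∀ k, y k ∈ X k) → fq A b h xstar ≤ fq A b h y)
    (R0 : ℝ)
    (hR0 : ∀ z : Fin K → Fin N → ℝ, (∀ k, z k ∈ X k) → fq A b h z ≤ fq A b h (x 0) →
      ∀ y : Fin K → Fin N → ℝ, (∀ k, y k ∈ X k) →
        (∀ z' : Fin K → Fin N → ℝ, (∀ k, z' k ∈ X k) → fq A b h y ≤ fq A b h z') →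
        Real.sqrt (∑ k, sqnorm (z k - y k)) ≤ R0)
    (r : ℕ) :
    fq A b h (x (r + 1)) - fq A b h xstar ≤
      3 * max (fq A b h (x 0) - fq A b h xstar)
          (4 * Real.log (2 * (N : ℝ) * (K : ℝ)) ^ 2 * lamMaxBlock A * R0 ^ 2) /
        (r + 1) := by
  have hL := lam_nonneg A
  have hmem : ∀ r k, x r k ∈ X k := by
    intro r
    cases r with
    | zero => exact hx0
    | succ r => exact fun k => (hstep r k).1
  have hdec : ∀ r, fq A b h (x (r + 1)) ≤ fq A b h (x r) := by
    intro r
    have h1 := descent A b X h hXcv hhcv P hP (x r) (x (r + 1)) (hmem r) (hstep r)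
    have h2 : 0 ≤ lamMaxBlock A / 2 * ∑ k, sqnorm (x (r + 1) k - x r k) :=
      mul_nonneg (by linarith) (Finset.sum_nonneg fun _ _ => sqnorm_nonneg' _)
    linarith
  have hle0 : ∀ r, fq A b h (x r) ≤ fq A b h (x 0) := by
    intro r
    induction r with
    | zero => exact le_rfl
    | succ r ih => exact (hdec r).trans ih
  have hR : ∀ r, ∑ k, sqnorm (x r k - xstar k) ≤ R0 ^ 2 := by
    intro r
    have h1 := hR0 (x r) (hmem r) (hle0 r) xstar hxstarX hxstar
    exact (Real.sqrt_le_iff.mp h1).2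
  have hm : K ≤ 2 ^ (Nat.log 2 K + 1) := (Nat.lt_pow_succ_log_self (by norm_num) K).le
  have hc := const_bound (N * K) K hNK hK (Nat.le_mul_of_pos_left K hN)
  rw [Nat.cast_mul, ← mul_assoc] at hc
  set c := ((Nat.log 2 K + 1 : ℕ) : ℝ) / 2 + 1
  set l := Real.log (2 * (N : ℝ) * (K : ℝ))
  have hb : c ^ 2 * (lamMaxBlock A * R0 ^ 2) ≤ 3 * l ^ 2 * (lamMaxBlock A * R0 ^ 2) :=
    mul_le_mul_of_nonneg_right hc (by positivity)
  have hmax1 := le_max_left (fq A b h (x 0) - fq A b h xstar)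
          (4 * l ^ 2 * lamMaxBlock A * R0 ^ 2)
  have hmax2 := le_max_right (fq A b h (x 0) - fq A b h xstar)
          (4 * l ^ 2 * lamMaxBlock A * R0 ^ 2)
  refine seq_bound (fun r => fq A b h (x r) - fq A b h xstar)
    (2 * c ^ 2 * lamMaxBlock A * R0 ^ 2) _ (by positivity)
    (fun r => sub_nonneg.mpr (hxstar _ (hmem r))) ?_ ?_ ?_ r
  · intro r
    have := recur A b X h hXcv hhcv P hP (x r) (x (r + 1)) xstar (hmem r) hxstarX (hstep r)
      (hxstar _ (hmem (r + 1))) R0 (hR (r + 1)) _ hm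
    simpa only [sub_sub_sub_cancel_right] using this
  · have h1 := hxstar _ (hmem 0)
    have h2 := hle0 1
    show fq A b h (x 1) - fq A b h xstar ≤ _
    linarith
  · linarith
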